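/- On V = H²₀(Ω), Ω ⊂ ℝ² bounded, the quadratic map G(v) = Γ(v,v) with Γ(v,w,φ) = ∫_Ω Δv (curl w · ∇φ) dx defines a compact operator G : V → V*: it maps bounded sets of V to relatively compact sets of V*. -/

import Mathlib

open MeasureTheory

noncomputable section

/-- Partial derivative `∂f/∂xᵢ`. -/
def pd (f : EuclideanSpace ℝ (Fin 2) → ℝ) (i : Fin 2) (x : EuclideanSpace ℝ (Fin 2)) : ℝ :=
  fderiv ℝ f x (EuclideanSpace.single i 1)

/-- Second partial derivative `∂²f/∂xᵢ∂xⱼ`. -/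
def pd2 (f : EuclideanSpace ℝ (Fin 2) → ℝ) (i j : Fin 2) (x : EuclideanSpace ℝ (Fin 2)) : ℝ :=
  fderiv ℝ (fun y => pd f j y) x (EuclideanSpace.single i 1)

/-- Laplacian `Δf`. -/
def lap (f : EuclideanSpace ℝ (Fin 2) → ℝ) (x : EuclideanSpace ℝ (Fin 2)) : ℝ :=
  pd2 f 0 0 x + pd2 f 1 1 x

/-- `|D²f(x)|²` (squared Frobenius norm of the Hessian). -/
def hess2 (f : EuclideanSpace ℝ (Fin 2) → ℝ) (x : EuclideanSpace ℝ (Fin 2)) : ℝ :=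
  ∑ i, ∑ j, (pd2 f i j x) ^ 2

/-- Trilinear form `Γ(v,w,φ) = ∫_Ω Δv (curl w · ∇φ)` with
`curl w = (∂w/∂y, −∂w/∂x)`. -/
def Gam (Ω : Set (EuclideanSpace ℝ (Fin 2))) (v w φ : EuclideanSpace ℝ (Fin 2) → ℝ) : ℝ :=
  ∫ x in Ω, lap v x * (pd w 1 x * pd φ 0 x - pd w 0 x * pd φ 1 x)

/-- A smooth function compactly supported in `Ω`, a proxy for membership in `H²₀(Ω)`. -/
def IsTest (Ω : Set (EuclideanSpace ℝ (Fin 2))) (φ : EuclideanSpace ℝ (Fin 2) → ℝ) : Prop :=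
  ContDiff ℝ (⊤ : ℕ∞) φ ∧ HasCompactSupport φ ∧ tsupport φ ⊆ Ω

/-- Dual (`V*`) seminorm of a functional on `H²₀(Ω)`:
supremum over test functions of unit `H²` seminorm. -/
def dualNorm (Ω : Set (EuclideanSpace ℝ (Fin 2)))
    (l : (EuclideanSpace ℝ (Fin 2) → ℝ) → ℝ) : ℝ :=
  sSup {r : ℝ | ∃ φ, IsTest Ω φ ∧ Real.sqrt (∫ x in Ω, hess2 φ x) ≤ 1 ∧ r = |l φ|}

/-! Write `z = v - w` and `s = v + w`. By polarisation, `2 (Γ(v,v,φ) - Γ(w,w,φ))` equals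
`Γ(z,s,φ) + Γ(s,z,φ)`. The trace-free tensor `T = ∇z ⊗ ∇s + ∇s ⊗ ∇z - (∇z · ∇s) I` satisfies
`div T = Δz ∇s + Δs ∇z`, so integrating by parts turns this sum into an integral of entries of `T`
against second derivatives of `φ`. The squares of the two independent entries of `T` add up to
`|∇z|² |∇s|²`, and two applications of the Cauchy–Schwarz inequality bound the fourth power of the
difference by `∫ |∇z|⁴ · ∫ |∇s|⁴ · (∫ |D²φ|²)²`, up to a constant.

The Gagliardo–Nirenberg inequality `∫ |∇z|⁴ ≲ (sup |z|)² ∫ |D²z|²` makes this small as soon as `v`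
and `w` are uniformly close. Uniform convergence along a subsequence comes from Arzelà–Ascoli: on a
horizontal segment, `f` varies by at most the square root of its length times the `L²` norm of
`∂₀f` on the line; since `∂₀f` has compact support, its square on the line is controlled by the
integral of `(∂₁∂₀f)²` over the plane. The same holds with the axes exchanged, hence an `H²` bound
yields a uniform bound and a Hölder-`1/2` modulus of continuity.
-/

section CauchySchwarz

lemma sq_integral_le_integral_mul_integral_of_sq_le_mul {α : Type*} [MeasurableSpace α]
    {μ : Measure α} {F G H : α → ℝ} (hF : Integrable F μ) (hG : Integrable G μ)
    (hH : Integrable H μ) (hG₀ : ∀ x, 0 ≤ G x) (hH₀ : ∀ x, 0 ≤ H x)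
    (h : ∀ x, F x ^ 2 ≤ G x * H x) :
    (∫ x, F x ∂μ) ^ 2 ≤ (∫ x, G x ∂μ) * ∫ x, H x ∂μ := by
  have pointwise (t : ℝ) (x : α) : 0 ≤ G x * (t * t) + 2 * t * F x + H x := by
    have hG_scaled : 0 ≤ t ^ 2 * G x := mul_nonneg (sq_nonneg t) (hG₀ x)
    have hF_le : |t * F x| ≤ √(t ^ 2 * G x) * √(H x) := by
      rw [← Real.sqrt_mul hG_scaled]
      refine Real.abs_le_sqrt ?_
      calc (t * F x) ^ 2 = t ^ 2 * F x ^ 2 := mul_pow t (F x) 2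
        _ ≤ t ^ 2 * (G x * H x) := by gcongr; exact h x
        _ = t ^ 2 * G x * H x := by ring
    have amgm := two_mul_le_add_sq √(t ^ 2 * G x) √(H x)
    rw [Real.sq_sqrt hG_scaled, Real.sq_sqrt (hH₀ x)] at amgm
    linarith [neg_abs_le (t * F x)]
  have quadratic_nonneg (t : ℝ) :
      0 ≤ (∫ x, G x ∂μ) * (t * t) + (2 * ∫ x, F x ∂μ) * t + ∫ x, H x ∂μ := by
    have hGt := hG.mul_const (t * t)
    have hFt := hF.const_mul (2 * t)
    calc 0 ≤ ∫ x, (G x * (t * t) + 2 * t * F x + H x) ∂μ := integral_nonneg (pointwise t)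
      _ = _ := by
        rw [integral_add (hGt.fun_add hFt) hH, integral_add hGt hFt, integral_mul_const,
          integral_const_mul]
        ring
  have hdiscrim := discrim_le_zero quadratic_nonneg
  rw [discrim] at hdiscrim
  linarith

end CauchySchwarz

section FDerivApply

lemma hasCompactSupport_pow {X : Type*} [TopologicalSpace X] {f : X → ℝ}
    (hf : HasCompactSupport f) {n : ℕ} (hn : n ≠ 0) : HasCompactSupport fun x => f x ^ n :=
  hf.comp_left (g := (· ^ n)) (zero_pow hn)

variable {E : Type*} [NormedAddCommGroup E] [NormedSpace ℝ E] {f : E → ℝ}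

lemma contDiff_fderiv_apply {m n : WithTop ℕ∞} (hf : ContDiff ℝ n f) (hmn : m + 1 ≤ n) (e : E) :
    ContDiff ℝ m fun x => fderiv ℝ f x e :=
  (hf.fderiv_right hmn).clm_apply contDiff_const

lemma continuous_fderiv_apply (hf : ContDiff ℝ 1 f) (e : E) :
    Continuous fun x => fderiv ℝ f x e :=
  (contDiff_fderiv_apply hf (m := 0) (zero_add 1).le e).continuous

end FDerivApply

section Interpolation

variable {E : Type*} [NormedAddCommGroup E] [NormedSpace ℝ E] [FiniteDimensional ℝ E]
  [MeasurableSpace E] [BorelSpace E] (μ : Measure E) [μ.IsAddHaarMeasure]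

lemma integral_fderiv_apply_eq_zero {f : E → ℝ} (hf : ContDiff ℝ 1 f)
    (hsupp : HasCompactSupport f) (e : E) : ∫ x, fderiv ℝ f x e ∂μ = 0 := by
  have hf' : Integrable (fun x => fderiv ℝ f x e) μ :=
    (continuous_fderiv_apply hf e).integrable_of_hasCompactSupport
      (hsupp.fderiv_apply (𝕜 := ℝ) e)
  simpa using integral_mul_fderiv_eq_neg_fderiv_mul_of_integrable (μ := μ) (v := e)
    (f := fun _ : E => (1 : ℝ)) (g := f) (by simp) (by simpa using hf')
    (by simpa using hf.continuous.integrable_of_hasCompactSupport hsupp)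
    (fun _ _ => differentiableAt_const _) (fun x _ => hf.differentiable one_ne_zero x)

lemma integral_fderiv_apply_pow_four_eq {u : E → ℝ} (hu : ContDiff ℝ 2 u)
    (hsupp : HasCompactSupport u) (e : E) :
    ∫ x, fderiv ℝ u x e ^ 4 ∂μ
      = -3 * ∫ x, u x * fderiv ℝ (fun y => fderiv ℝ u y e) x e * fderiv ℝ u x e ^ 2 ∂μ := by
  set p : E → ℝ := fun x => fderiv ℝ u x e
  have hp : ContDiff ℝ 1 p := contDiff_fderiv_apply hu one_add_one_eq_two.le e
  have hp4 : Integrable (fun x => p x ^ 4) μ :=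
    (hp.continuous.pow 4).integrable_of_hasCompactSupport
      (hasCompactSupport_pow (hsupp.fderiv_apply (𝕜 := ℝ) e) four_ne_zero)
  have hupp : Integrable (fun x => u x * fderiv ℝ p x e * p x ^ 2) μ :=
    ((hu.continuous.mul (continuous_fderiv_apply hp e)).mul
      (hp.continuous.pow 2)).integrable_of_hasCompactSupport hsupp.mul_right.mul_right
  have product_rule (x : E) : fderiv ℝ (fun y => u y * p y ^ 3) x e
      = p x ^ 4 + 3 * (u x * fderiv ℝ p x e * p x ^ 2) := by
    have hpx : DifferentiableAt ℝ p x := hp.differentiable one_ne_zero x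
    rw [fderiv_fun_mul (hu.differentiable two_ne_zero x) (hpx.fun_pow 3), fderiv_fun_pow 3 hpx]
    simp only [add_apply, smul_apply, smul_eq_mul, nsmul_eq_mul]
    change u x * _ + p x ^ 3 * p x = _
    push_cast
    ring
  have hzero := integral_fderiv_apply_eq_zero μ ((hu.of_le one_le_two).mul (hp.pow 3))
    hsupp.mul_right e
  simp_rw [product_rule] at hzero
  rw [integral_add hp4 (hupp.const_mul 3), integral_const_mul] at hzero
  linarith

lemma integral_fderiv_apply_pow_four_le {u : E → ℝ} (hu : ContDiff ℝ 2 u)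
    (hsupp : HasCompactSupport u) (e : E) {A : ℝ} (hA : ∀ x, |u x| ≤ A) :
    ∫ x, fderiv ℝ u x e ^ 4 ∂μ
      ≤ 9 * A ^ 2 * ∫ x, fderiv ℝ (fun y => fderiv ℝ u y e) x e ^ 2 ∂μ := by
  have by_parts := integral_fderiv_apply_pow_four_eq μ hu hsupp e
  set p : E → ℝ := fun x => fderiv ℝ u x e
  set q : E → ℝ := fun x => fderiv ℝ p x e
  have hp : ContDiff ℝ 1 p := contDiff_fderiv_apply hu one_add_one_eq_two.le e
  have hpsupp : HasCompactSupport p := hsupp.fderiv_apply (𝕜 := ℝ) e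
  have hq : Continuous q := continuous_fderiv_apply hp e
  have hp4 : Integrable (fun x => p x ^ 4) μ :=
    (hp.continuous.pow 4).integrable_of_hasCompactSupport
      (hasCompactSupport_pow hpsupp four_ne_zero)
  have hq2 : Integrable (fun x => q x ^ 2) μ :=
    (hq.pow 2).integrable_of_hasCompactSupport
      (hasCompactSupport_pow (hpsupp.fderiv_apply (𝕜 := ℝ) e) two_ne_zero)
  have huqp : Integrable (fun x => u x * q x * p x ^ 2) μ :=
    ((hu.continuous.mul hq).mul (hp.continuous.pow 2)).integrable_of_hasCompactSupport
      hsupp.mul_right.mul_right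
  have cauchy_schwarz : (∫ x, u x * q x * p x ^ 2 ∂μ) ^ 2
      ≤ (A ^ 2 * ∫ x, q x ^ 2 ∂μ) * ∫ x, p x ^ 4 ∂μ := by
    rw [← integral_const_mul (A ^ 2) fun x => q x ^ 2]
    refine sq_integral_le_integral_mul_integral_of_sq_le_mul huqp (hq2.const_mul _) hp4
      (fun x => mul_nonneg (sq_nonneg A) (sq_nonneg (q x)))
      (fun x => Even.pow_nonneg ⟨2, rfl⟩ (p x)) fun x => ?_
    calc (u x * q x * p x ^ 2) ^ 2 = u x ^ 2 * (q x ^ 2 * p x ^ 4) := by ring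
      _ ≤ A ^ 2 * (q x ^ 2 * p x ^ 4) := by
        gcongr ?_ * _
        exact sq_le_sq.mpr ((hA x).trans (le_abs_self A))
      _ = A ^ 2 * q x ^ 2 * p x ^ 4 := by ring
  rcases (show 0 ≤ ∫ x, p x ^ 4 ∂μ by positivity).eq_or_lt with hzero | hpos
  · rw [← hzero]
    positivity
  · refine le_of_mul_le_mul_right ?_ hpos
    calc (∫ x, p x ^ 4 ∂μ) * ∫ x, p x ^ 4 ∂μ
        = 9 * (∫ x, u x * q x * p x ^ 2 ∂μ) ^ 2 := by rw [by_parts]; ring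
      _ ≤ 9 * ((A ^ 2 * ∫ x, q x ^ 2 ∂μ) * ∫ x, p x ^ 4 ∂μ) := by gcongr
      _ = 9 * A ^ 2 * (∫ x, q x ^ 2 ∂μ) * ∫ x, p x ^ 4 ∂μ := by ring

end Interpolation

section LineEstimates

variable {E : Type*} [NormedAddCommGroup E] [NormedSpace ℝ E] {f : E → ℝ}

lemma hasCompactSupport_comp_line (hsupp : HasCompactSupport f) (x : E) {e : E} (he : e ≠ 0) :
    HasCompactSupport fun t : ℝ => f (x + t • e) :=
  hsupp.comp_isClosedEmbedding
    ((Homeomorph.addLeft x).isClosedEmbedding.comp (isClosedEmbedding_smul_left he))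

lemma hasDerivAt_comp_line (hf : Differentiable ℝ f) (x e : E) (t : ℝ) :
    HasDerivAt (fun t : ℝ => f (x + t • e)) (fderiv ℝ f (x + t • e) e) t := by
  have hline : HasDerivAt (fun t : ℝ => x + t • e) e t := by
    simpa using ((hasDerivAt_id t).smul_const e).const_add x
  exact (hf _).hasFDerivAt.comp_hasDerivAt t hline

lemma sq_sub_le_abs_mul_integral_fderiv_sq (hf : ContDiff ℝ 1 f) (hsupp : HasCompactSupport f)
    (x : E) {e : E} (he : e ≠ 0) (a : ℝ) :
    (f (x + a • e) - f x) ^ 2 ≤ |a| * ∫ t : ℝ, fderiv ℝ f (x + t • e) e ^ 2 := by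
  set g : ℝ → ℝ := fun t => fderiv ℝ f (x + t • e) e
  have hg : Continuous g := (continuous_fderiv_apply hf e).comp (by fun_prop)
  have hg2 : Integrable fun t => g t ^ 2 :=
    (hg.pow 2).integrable_of_hasCompactSupport (hasCompactSupport_pow
      (hasCompactSupport_comp_line (hsupp.fderiv_apply (𝕜 := ℝ) e) x he) two_ne_zero)
  have ftc : ∫ t in (0 : ℝ)..a, g t = f (x + a • e) - f x := by
    simpa using intervalIntegral.integral_eq_sub_of_hasDerivAt
      (fun t _ => hasDerivAt_comp_line (hf.differentiable one_ne_zero) x e t)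
      (hg.intervalIntegrable 0 a)
  calc (f (x + a • e) - f x) ^ 2 = (∫ t in Set.uIoc 0 a, g t) ^ 2 := by
        rw [← ftc, ← sq_abs, intervalIntegral.abs_integral_eq_abs_integral_uIoc, sq_abs]
    _ ≤ (∫ _ in Set.uIoc 0 a, (1 : ℝ)) * ∫ t in Set.uIoc 0 a, g t ^ 2 :=
        sq_integral_le_integral_mul_integral_of_sq_le_mul
          (intervalIntegrable_iff.mp (hg.intervalIntegrable 0 a))
          (intervalIntegrable_iff.mp intervalIntegrable_const) hg2.integrableOn
          (fun _ => zero_le_one) (fun _ => sq_nonneg _) fun _ => (one_mul _).ge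
    _ = |a| * ∫ t in Set.uIoc 0 a, g t ^ 2 := by simp [Measure.real]
    _ ≤ |a| * ∫ t, g t ^ 2 :=
        mul_le_mul_of_nonneg_left
          (setIntegral_le_integral hg2 (.of_forall fun _ => sq_nonneg _)) (abs_nonneg a)

lemma apply_add_two_mul_smul_eq_zero {R : ℝ} (hball : tsupport f ⊆ Metric.ball 0 R) {x e : E}
    (hx : ‖x‖ < R) (he : ‖e‖ = 1) : f (x + (2 * R) • e) = 0 := by
  refine image_eq_zero_of_notMem_tsupport fun hmem => ?_
  have hnear : ‖x + (2 * R) • e‖ < R := by simpa using hball hmem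
  have hfar : 2 * R ≤ ‖(2 * R) • e‖ := by
    rw [norm_smul, he, mul_one]
    exact le_abs_self _
  have htriangle : ‖(2 * R) • e‖ ≤ ‖x + (2 * R) • e‖ + ‖x‖ := by
    simpa using norm_sub_le (x + (2 * R) • e) x
  linarith

lemma sq_le_mul_integral_fderiv_sq (hf : ContDiff ℝ 1 f) (hsupp : HasCompactSupport f) {R : ℝ}
    (hR : 0 ≤ R) (hball : tsupport f ⊆ Metric.ball 0 R) (x : E) {e : E} (he : ‖e‖ = 1) :
    f x ^ 2 ≤ 2 * R * ∫ t : ℝ, fderiv ℝ f (x + t • e) e ^ 2 := by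
  by_cases hx : f x = 0
  · have : 0 ≤ ∫ t : ℝ, fderiv ℝ f (x + t • e) e ^ 2 := integral_nonneg fun _ => sq_nonneg _
    rw [hx, sq, mul_zero]
    positivity
  · have hxR : ‖x‖ < R := by simpa using hball (subset_tsupport f hx)
    have he₀ : e ≠ 0 := norm_ne_zero_iff.mp (he ▸ one_ne_zero)
    have h := sq_sub_le_abs_mul_integral_fderiv_sq hf hsupp x he₀ (2 * R)
    rwa [apply_add_two_mul_smul_eq_zero hball hxR he, zero_sub, neg_sq,
      abs_of_nonneg (by positivity)] at h

end LineEstimates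

section PlaneEstimates

variable {E : Type*} [NormedAddCommGroup E] [InnerProductSpace ℝ E] [FiniteDimensional ℝ E]
  [MeasurableSpace E] [BorelSpace E] (b : OrthonormalBasis (Fin 2) ℝ E)

lemma measurePreserving_add_smul_add_smul (x : E) :
    MeasurePreserving fun p : ℝ × ℝ => x + p.1 • b 0 + p.2 • b 1 := by
  have h := (measurePreserving_add_left volume x).comp
    (b.measurePreserving_repr_symm.comp ((PiLp.volume_preserving_toLp (Fin 2)).comp
      (volume_preserving_finTwoArrow ℝ).symm))
  have hformula (p : ℝ × ℝ) : b.repr.symm !₂[p.1, p.2] = p.1 • b 0 + p.2 • b 1 := by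
    rw [← b.sum_repr_symm, Fin.sum_univ_two]
    rfl
  refine Eq.mp (congrArg (MeasurePreserving · volume volume) (funext fun p => ?_)) h
  rw [add_assoc, ← hformula]
  rfl

variable {b}

lemma integrable_prod_add_smul_add_smul {F : E → ℝ} (hF : Integrable F) (x : E) :
    Integrable fun p : ℝ × ℝ => F (x + p.1 • b 0 + p.2 • b 1) :=
  (measurePreserving_add_smul_add_smul b x).integrable_comp_of_integrable hF

lemma integral_integral_add_smul_add_smul {F : E → ℝ} (hF : Integrable F) (x : E) :
    ∫ s : ℝ, ∫ t : ℝ, F (x + s • b 0 + t • b 1) = ∫ y, F y := by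
  have hmp := measurePreserving_add_smul_add_smul b x
  calc _ = ∫ p : ℝ × ℝ, F (x + p.1 • b 0 + p.2 • b 1) :=
        (integral_prod _ (integrable_prod_add_smul_add_smul hF x)).symm
    _ = ∫ y, F y := by
        rw [← integral_map (φ := fun p : ℝ × ℝ => x + p.1 • b 0 + p.2 • b 1) hmp.aemeasurable
          (by rw [hmp.map_eq]; exact hF.aestronglyMeasurable), hmp.map_eq]

variable {f : E → ℝ} {R : ℝ}

lemma sq_sub_le_mul_integral_mixed_sq (hf : ContDiff ℝ 2 f) (hsupp : HasCompactSupport f)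
    (hR : 0 ≤ R) (hball : tsupport f ⊆ Metric.ball 0 R) (x : E) (a : ℝ) :
    (f (x + a • b 0) - f x) ^ 2
      ≤ 2 * R * |a| * ∫ y, fderiv ℝ (fun z => fderiv ℝ f z (b 0)) y (b 1) ^ 2 := by
  set p : E → ℝ := fun z => fderiv ℝ f z (b 0)
  have hp : ContDiff ℝ 1 p := contDiff_fderiv_apply hf one_add_one_eq_two.le _
  have hpsupp : HasCompactSupport p := hsupp.fderiv_apply (𝕜 := ℝ) _
  have hpball : tsupport p ⊆ Metric.ball 0 R :=
    (tsupport_fderiv_apply_subset ℝ _).trans hball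
  have hp' : Integrable fun y => fderiv ℝ p y (b 1) ^ 2 :=
    ((continuous_fderiv_apply hp _).pow 2).integrable_of_hasCompactSupport
      (hasCompactSupport_pow (hpsupp.fderiv_apply (𝕜 := ℝ) _) two_ne_zero)
  calc (f (x + a • b 0) - f x) ^ 2 ≤ |a| * ∫ s : ℝ, p (x + s • b 0) ^ 2 :=
        sq_sub_le_abs_mul_integral_fderiv_sq (hf.of_le one_le_two) hsupp x
          (b.orthonormal.ne_zero 0) a
    _ ≤ |a| * ∫ s : ℝ, 2 * R * ∫ t : ℝ, fderiv ℝ p (x + s • b 0 + t • b 1) (b 1) ^ 2 := by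
        refine mul_le_mul_of_nonneg_left ?_ (abs_nonneg a)
        refine integral_mono_of_nonneg (.of_forall fun _ => sq_nonneg _)
          ((integrable_prod_add_smul_add_smul hp' x).integral_prod_left.const_mul _)
          (.of_forall fun s => ?_)
        exact sq_le_mul_integral_fderiv_sq hp hpsupp hR hpball _ (b.norm_eq_one 1)
    _ = 2 * R * |a| * ∫ y, fderiv ℝ p y (b 1) ^ 2 := by
        rw [integral_const_mul, integral_integral_add_smul_add_smul hp']
        ring

lemma sq_le_mul_integral_mixed_sq (hf : ContDiff ℝ 2 f) (hsupp : HasCompactSupport f)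
    (hR : 0 ≤ R) (hball : tsupport f ⊆ Metric.ball 0 R) (x : E) :
    f x ^ 2 ≤ 4 * R ^ 2 * ∫ y, fderiv ℝ (fun z => fderiv ℝ f z (b 0)) y (b 1) ^ 2 := by
  by_cases hx : f x = 0
  · rw [hx, sq, mul_zero]
    exact mul_nonneg (by positivity) (integral_nonneg fun _ => sq_nonneg _)
  · have hxR : ‖x‖ < R := by simpa using hball (subset_tsupport f hx)
    have h := sq_sub_le_mul_integral_mixed_sq (b := b) hf hsupp hR hball x (2 * R)
    rw [apply_add_two_mul_smul_eq_zero hball hxR (b.norm_eq_one 0), zero_sub, neg_sq,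
      abs_of_nonneg (by positivity)] at h
    linarith

lemma sq_sub_le_norm_sub_mul_integral_mixed_sq (hf : ContDiff ℝ 2 f) (hsupp : HasCompactSupport f)
    (hR : 0 ≤ R) (hball : tsupport f ⊆ Metric.ball 0 R) (x y : E) :
    (f x - f y) ^ 2 ≤ 4 * R * ‖x - y‖
      * ((∫ z, fderiv ℝ (fun z => fderiv ℝ f z (b 0)) z (b 1) ^ 2)
        + ∫ z, fderiv ℝ (fun z => fderiv ℝ f z (b 1)) z (b 0) ^ 2) := by
  set I := ∫ z, fderiv ℝ (fun z => fderiv ℝ f z (b 0)) z (b 1) ^ 2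
  set J := ∫ z, fderiv ℝ (fun z => fderiv ℝ f z (b 1)) z (b 0) ^ 2
  have : 0 ≤ I := integral_nonneg fun _ => sq_nonneg _
  have : 0 ≤ J := integral_nonneg fun _ => sq_nonneg _
  set α := inner ℝ (b 0) (x - y)
  set β := inner ℝ (b 1) (x - y)
  have hα : |α| ≤ ‖x - y‖ := by simpa using abs_real_inner_le_norm (b 0) (x - y)
  have hβ : |β| ≤ ‖x - y‖ := by simpa using abs_real_inner_le_norm (b 1) (x - y)
  have hx : x = y + α • b 0 + β • b 1 := by
    rw [add_assoc, ← Fin.sum_univ_two fun i => inner ℝ (b i) (x - y) • b i, b.sum_repr',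
      add_sub_cancel]
  have horizontal : (f (y + α • b 0) - f y) ^ 2 ≤ 2 * R * |α| * I :=
    sq_sub_le_mul_integral_mixed_sq hf hsupp hR hball y α
  have vertical : (f x - f (y + α • b 0)) ^ 2 ≤ 2 * R * |β| * J := by
    rw [hx]
    simpa using sq_sub_le_mul_integral_mixed_sq (b := b.reindex (Equiv.swap 0 1)) hf hsupp hR
      hball (y + α • b 0) β
  calc (f x - f y) ^ 2 = ((f x - f (y + α • b 0)) + (f (y + α • b 0) - f y)) ^ 2 := by ring
    _ ≤ 2 * ((f x - f (y + α • b 0)) ^ 2 + (f (y + α • b 0) - f y) ^ 2) := add_sq_le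
    _ ≤ 2 * (2 * R * |β| * J + 2 * R * |α| * I) := by gcongr
    _ ≤ 2 * (2 * R * ‖x - y‖ * J + 2 * R * ‖x - y‖ * I) := by gcongr
    _ = 4 * R * ‖x - y‖ * (I + J) := by ring

end PlaneEstimates

section ArzelaAscoli

lemma exists_strictMono_uniformCauchySeqOn {X β : Type*} [TopologicalSpace X] [MetricSpace β]
    {K : Set X} (hK : IsCompact K) {s : Set β} (hs : IsCompact s) {u : ℕ → X → β}
    (hu : ∀ n, Set.MapsTo (u n) K s) (hequi : EquicontinuousOn u K) :
    ∃ k : ℕ → ℕ, StrictMono k ∧ UniformCauchySeqOn (fun n => u (k n)) Filter.atTop K := by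
  have := isCompact_iff_compactSpace.mp hK
  let U : ℕ → BoundedContinuousFunction K β := fun n =>
    BoundedContinuousFunction.mkOfCompact ⟨K.domRestrict (u n), (hequi.continuousOn n).domRestrict⟩
  have hcompact : IsCompact (closure (Set.range U)) := by
    refine BoundedContinuousFunction.arzela_ascoli s hs _ ?_ ?_
    · rintro _ x ⟨n, rfl⟩
      exact hu n x.2
    · intro x V hV
      filter_upwards [(equicontinuous_restrict_iff u).mpr hequi x V hV]
      rintro y hy ⟨_, n, rfl⟩
      exact hy n
  obtain ⟨L, -, k, hk, hlim⟩ :=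
    hcompact.tendsto_subseq fun n => subset_closure (Set.mem_range_self n)
  refine ⟨k, hk, Metric.uniformCauchySeqOn_iff.mpr fun ε hε => ?_⟩
  obtain ⟨N, hN⟩ := Metric.cauchySeq_iff.mp hlim.cauchySeq ε hε
  exact ⟨N, fun m hm n hn x hx =>
    (BoundedContinuousFunction.dist_coe_le_dist ⟨x, hx⟩).trans_lt (hN m hm n hn)⟩

end ArzelaAscoli

namespace IsTest

variable {Ω : Set (EuclideanSpace ℝ (Fin 2))} {f g : EuclideanSpace ℝ (Fin 2) → ℝ}

lemma contDiff_two (hf : IsTest Ω f) : ContDiff ℝ 2 f :=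
  hf.1.of_le (WithTop.coe_le_coe.mpr le_top)

lemma differentiable (hf : IsTest Ω f) : Differentiable ℝ f :=
  hf.contDiff_two.differentiable two_ne_zero

lemma integrable (hf : IsTest Ω f) : Integrable f :=
  hf.1.continuous.integrable_of_hasCompactSupport hf.2.1

lemma setIntegral_eq_integral (hf : IsTest Ω f) : ∫ x in Ω, f x = ∫ x, f x :=
  setIntegral_eq_integral_of_forall_compl_eq_zero fun _ hx =>
    image_eq_zero_of_notMem_tsupport fun hmem => hx (hf.2.2 hmem)

protected lemma mono {Ω' : Set (EuclideanSpace ℝ (Fin 2))} (hf : IsTest Ω f) (h : Ω ⊆ Ω') :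
    IsTest Ω' f :=
  ⟨hf.1, hf.2.1, hf.2.2.trans h⟩

protected lemma pd (hf : IsTest Ω f) (i : Fin 2) : IsTest Ω (pd f i) :=
  ⟨contDiff_fderiv_apply hf.1 (by simp) _, hf.2.1.fderiv_apply (𝕜 := ℝ) _,
    (tsupport_fderiv_apply_subset ℝ _).trans hf.2.2⟩

protected lemma pd2 (hf : IsTest Ω f) (i j : Fin 2) : IsTest Ω (pd2 f i j) :=
  (hf.pd j).pd i

protected lemma add (hf : IsTest Ω f) (hg : IsTest Ω g) : IsTest Ω fun x => f x + g x :=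
  ⟨hf.1.add hg.1, hf.2.1.add hg.2.1, (tsupport_add f g).trans (Set.union_subset hf.2.2 hg.2.2)⟩

protected lemma sub (hf : IsTest Ω f) (hg : IsTest Ω g) : IsTest Ω fun x => f x - g x :=
  ⟨hf.1.sub hg.1, hf.2.1.sub hg.2.1, (tsupport_sub f g).trans (Set.union_subset hf.2.2 hg.2.2)⟩

protected lemma mul (hf : IsTest Ω f) (hg : IsTest Ω g) : IsTest Ω fun x => f x * g x :=
  ⟨hf.1.mul hg.1, hf.2.1.mul_right, tsupport_mul_subset_left.trans hf.2.2⟩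

protected lemma const_mul (c : ℝ) (hf : IsTest Ω f) : IsTest Ω fun x => c * f x :=
  ⟨contDiff_const.mul hf.1, hf.2.1.mul_left, tsupport_mul_subset_right.trans hf.2.2⟩

protected lemma pow (hf : IsTest Ω f) {n : ℕ} (hn : n ≠ 0) : IsTest Ω fun x => f x ^ n :=
  ⟨hf.1.pow n, hasCompactSupport_pow hf.2.1 hn,
    (closure_mono fun _ => ne_zero_pow hn).trans hf.2.2⟩

protected lemma lap (hf : IsTest Ω f) : IsTest Ω (lap f) :=
  (hf.pd2 0 0).add (hf.pd2 1 1)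

end IsTest

lemma hess2_eq (f : EuclideanSpace ℝ (Fin 2) → ℝ) (x : EuclideanSpace ℝ (Fin 2)) :
    hess2 f x = pd2 f 0 0 x ^ 2 + pd2 f 0 1 x ^ 2 + (pd2 f 1 0 x ^ 2 + pd2 f 1 1 x ^ 2) := by
  simp only [hess2, Fin.sum_univ_two]

section Calculus

variable {Ω : Set (EuclideanSpace ℝ (Fin 2))} {f g : EuclideanSpace ℝ (Fin 2) → ℝ}

lemma pd_add (hf : Differentiable ℝ f) (hg : Differentiable ℝ g) (i : Fin 2) :
    pd (fun x => f x + g x) i = fun x => pd f i x + pd g i x := by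
  funext x
  simp only [pd, fderiv_fun_add (hf x) (hg x), add_apply]

lemma pd_sub (hf : Differentiable ℝ f) (hg : Differentiable ℝ g) (i : Fin 2) :
    pd (fun x => f x - g x) i = fun x => pd f i x - pd g i x := by
  funext x
  simp only [pd, fderiv_fun_sub (hf x) (hg x), sub_apply]

lemma pd_mul (hf : Differentiable ℝ f) (hg : Differentiable ℝ g) (i : Fin 2) :
    pd (fun x => f x * g x) i = fun x => f x * pd g i x + g x * pd f i x := by
  funext x
  simp only [pd, fderiv_fun_mul (hf x) (hg x), add_apply, smul_apply, smul_eq_mul]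

lemma pd_pd (f : EuclideanSpace ℝ (Fin 2) → ℝ) (i j : Fin 2) : pd (pd f j) i = pd2 f i j :=
  rfl

lemma differentiable_pd (hf : ContDiff ℝ 2 f) (i : Fin 2) : Differentiable ℝ (pd f i) :=
  (contDiff_fderiv_apply hf one_add_one_eq_two.le _).differentiable one_ne_zero

lemma pd2_add (hf : ContDiff ℝ 2 f) (hg : ContDiff ℝ 2 g) (i j : Fin 2) :
    pd2 (fun x => f x + g x) i j = fun x => pd2 f i j x + pd2 g i j x := by
  rw [← pd_pd, pd_add (hf.differentiable two_ne_zero) (hg.differentiable two_ne_zero),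
    pd_add (differentiable_pd hf j) (differentiable_pd hg j)]
  rfl

lemma pd2_sub (hf : ContDiff ℝ 2 f) (hg : ContDiff ℝ 2 g) (i j : Fin 2) :
    pd2 (fun x => f x - g x) i j = fun x => pd2 f i j x - pd2 g i j x := by
  rw [← pd_pd, pd_sub (hf.differentiable two_ne_zero) (hg.differentiable two_ne_zero),
    pd_sub (differentiable_pd hf j) (differentiable_pd hg j)]
  rfl

lemma pd2_comm (hf : ContDiff ℝ 2 f) (i j : Fin 2) : pd2 f i j = pd2 f j i := by
  funext x
  have hf' : DifferentiableAt ℝ (fderiv ℝ f) x :=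
    (hf.fderiv_right one_add_one_eq_two.le).differentiable one_ne_zero x
  have second_fderiv (i j : Fin 2) : pd2 f i j x
      = fderiv ℝ (fderiv ℝ f) x (EuclideanSpace.single i 1) (EuclideanSpace.single j 1) := by
    simp only [pd2, pd]
    rw [fderiv_clm_apply hf' (differentiableAt_const _)]
    simp
  rw [second_fderiv, second_fderiv]
  exact hf.contDiffAt.isSymmSndFDerivAt (by simp) _ _

lemma integral_pd_eq_zero (hf : IsTest Ω f) (i : Fin 2) : ∫ x, pd f i x = 0 :=
  integral_fderiv_apply_eq_zero volume (hf.contDiff_two.of_le one_le_two) hf.2.1 _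

lemma lap_add (hf : ContDiff ℝ 2 f) (hg : ContDiff ℝ 2 g) :
    lap (fun x => f x + g x) = fun x => lap f x + lap g x := by
  funext x
  simp only [lap, pd2_add hf hg]
  ring

lemma lap_sub (hf : ContDiff ℝ 2 f) (hg : ContDiff ℝ 2 g) :
    lap (fun x => f x - g x) = fun x => lap f x - lap g x := by
  funext x
  simp only [lap, pd2_sub hf hg]
  ring

end Calculus

section SobolevBounds

variable {Ω : Set (EuclideanSpace ℝ (Fin 2))} {f g : EuclideanSpace ℝ (Fin 2) → ℝ}

protected lemma IsTest.hess2 (hf : IsTest Ω f) : IsTest Ω (hess2 f) := by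
  have hsq (i j : Fin 2) := (hf.pd2 i j).pow two_ne_zero
  rw [funext (hess2_eq f)]
  exact ((hsq 0 0).add (hsq 0 1)).add ((hsq 1 0).add (hsq 1 1))

lemma integral_hess2_eq (hf : IsTest Ω f) :
    ∫ x, hess2 f x = (∫ x, pd2 f 0 0 x ^ 2) + (∫ x, pd2 f 0 1 x ^ 2)
      + ((∫ x, pd2 f 1 0 x ^ 2) + ∫ x, pd2 f 1 1 x ^ 2) := by
  have hsq (i j : Fin 2) := (hf.pd2 i j).pow two_ne_zero
  simp only [hess2_eq]
  rw [integral_add ((hsq 0 0).add (hsq 0 1)).integrable ((hsq 1 0).add (hsq 1 1)).integrable,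
    integral_add (hsq 0 0).integrable (hsq 0 1).integrable,
    integral_add (hsq 1 0).integrable (hsq 1 1).integrable]

lemma integral_pd2_sq_nonneg (f : EuclideanSpace ℝ (Fin 2) → ℝ) (i j : Fin 2) :
    0 ≤ ∫ x, pd2 f i j x ^ 2 :=
  integral_nonneg fun _ => sq_nonneg _

lemma integral_hess2_nonneg (f : EuclideanSpace ℝ (Fin 2) → ℝ) : 0 ≤ ∫ x, hess2 f x :=
  integral_nonneg fun x => by rw [hess2_eq]; positivity

lemma integral_hess2_le_sq (hf : IsTest Ω f) {C : ℝ} (hC : √(∫ x in Ω, hess2 f x) ≤ C) :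
    ∫ x, hess2 f x ≤ C ^ 2 := by
  rw [← hf.hess2.setIntegral_eq_integral]
  exact (Real.sqrt_le_iff.mp hC).2

lemma integral_hess2_sub_add_integral_hess2_add (hf : IsTest Ω f) (hg : IsTest Ω g) :
    (∫ x, hess2 (fun y => f y - g y) x) + ∫ x, hess2 (fun y => f y + g y) x
      = 2 * ((∫ x, hess2 f x) + ∫ x, hess2 g x) := by
  rw [← integral_add (hf.sub hg).hess2.integrable (hf.add hg).hess2.integrable,
    ← integral_add hf.hess2.integrable hg.hess2.integrable, ← integral_const_mul]
  congr with x
  simp only [hess2_eq, pd2_add hf.contDiff_two hg.contDiff_two,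
    pd2_sub hf.contDiff_two hg.contDiff_two]
  ring

/-- The squared length `|∇f|²` of the gradient. -/
def gradSq (f : EuclideanSpace ℝ (Fin 2) → ℝ) (x : EuclideanSpace ℝ (Fin 2)) : ℝ :=
  pd f 0 x ^ 2 + pd f 1 x ^ 2

lemma gradSq_nonneg (f : EuclideanSpace ℝ (Fin 2) → ℝ) (x : EuclideanSpace ℝ (Fin 2)) :
    0 ≤ gradSq f x :=
  add_nonneg (sq_nonneg _) (sq_nonneg _)

protected lemma IsTest.gradSq (hf : IsTest Ω f) : IsTest Ω (gradSq f) :=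
  ((hf.pd 0).pow two_ne_zero).add ((hf.pd 1).pow two_ne_zero)

lemma integral_pd_pow_four_le (hf : IsTest Ω f) (i : Fin 2) {A : ℝ} (hA : ∀ x, |f x| ≤ A) :
    ∫ x, pd f i x ^ 4 ≤ 9 * A ^ 2 * ∫ x, pd2 f i i x ^ 2 :=
  integral_fderiv_apply_pow_four_le volume hf.contDiff_two hf.2.1 _ hA

lemma integral_gradSq_sq_le (hf : IsTest Ω f) {A : ℝ} (hA : ∀ x, |f x| ≤ A) :
    ∫ x, gradSq f x ^ 2 ≤ 18 * A ^ 2 * ∫ x, hess2 f x := by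
  have hpow (i : Fin 2) := ((hf.pd i).pow four_ne_zero).integrable
  calc ∫ x, gradSq f x ^ 2 ≤ ∫ x, 2 * (pd f 0 x ^ 4 + pd f 1 x ^ 4) := by
        refine integral_mono (hf.gradSq.pow two_ne_zero).integrable
          (((hpow 0).add (hpow 1)).const_mul 2) fun x => ?_
        calc gradSq f x ^ 2 ≤ 2 * ((pd f 0 x ^ 2) ^ 2 + (pd f 1 x ^ 2) ^ 2) := add_sq_le
          _ = 2 * (pd f 0 x ^ 4 + pd f 1 x ^ 4) := by ring
    _ = 2 * ((∫ x, pd f 0 x ^ 4) + ∫ x, pd f 1 x ^ 4) := by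
        rw [integral_const_mul, integral_add (hpow 0) (hpow 1)]
    _ ≤ 2 * (9 * A ^ 2 * (∫ x, pd2 f 0 0 x ^ 2) + 9 * A ^ 2 * ∫ x, pd2 f 1 1 x ^ 2) := by
        gcongr
        exacts [integral_pd_pow_four_le hf 0 hA, integral_pd_pow_four_le hf 1 hA]
    _ = 18 * A ^ 2 * ((∫ x, pd2 f 0 0 x ^ 2) + ∫ x, pd2 f 1 1 x ^ 2) := by ring
    _ ≤ 18 * A ^ 2 * ∫ x, hess2 f x := by
        refine mul_le_mul_of_nonneg_left ?_ (by positivity)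
        linarith [integral_hess2_eq hf, integral_pd2_sq_nonneg f 0 1,
          integral_pd2_sq_nonneg f 1 0]

variable {R : ℝ}

lemma sq_le_mul_integral_hess2 (hR : 0 ≤ R) (hf : IsTest (Metric.ball 0 R) f)
    (x : EuclideanSpace ℝ (Fin 2)) :
    f x ^ 2 ≤ 4 * R ^ 2 * ∫ y, hess2 f y := by
  have h := sq_le_mul_integral_mixed_sq (b := EuclideanSpace.basisFun (Fin 2) ℝ)
    hf.contDiff_two hf.2.1 hR hf.2.2 x
  simp only [EuclideanSpace.basisFun_apply] at h
  refine h.trans (mul_le_mul_of_nonneg_left ?_ (by positivity))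
  change ∫ y, pd2 f 1 0 y ^ 2 ≤ _
  linarith [integral_hess2_eq hf, integral_pd2_sq_nonneg f 0 0, integral_pd2_sq_nonneg f 0 1,
    integral_pd2_sq_nonneg f 1 1]

lemma sq_sub_le_mul_integral_hess2 (hR : 0 ≤ R) (hf : IsTest (Metric.ball 0 R) f)
    (x y : EuclideanSpace ℝ (Fin 2)) :
    (f x - f y) ^ 2 ≤ 4 * R * ‖x - y‖ * ∫ z, hess2 f z := by
  have h := sq_sub_le_norm_sub_mul_integral_mixed_sq (b := EuclideanSpace.basisFun (Fin 2) ℝ)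
    hf.contDiff_two hf.2.1 hR hf.2.2 x y
  simp only [EuclideanSpace.basisFun_apply] at h
  refine h.trans (mul_le_mul_of_nonneg_left ?_ (by positivity))
  change (∫ z, pd2 f 1 0 z ^ 2) + ∫ z, pd2 f 0 1 z ^ 2 ≤ _
  linarith [integral_hess2_eq hf, integral_pd2_sq_nonneg f 0 0, integral_pd2_sq_nonneg f 1 1]

lemma integral_gradSq_sq_le_of_ball (hR : 0 ≤ R) (hf : IsTest (Metric.ball 0 R) f) :
    ∫ x, gradSq f x ^ 2 ≤ 72 * R ^ 2 * (∫ x, hess2 f x) ^ 2 := by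
  set N := ∫ x, hess2 f x
  have hN : 0 ≤ N := integral_hess2_nonneg f
  have hsup (x : EuclideanSpace ℝ (Fin 2)) : |f x| ≤ √(4 * R ^ 2 * N) :=
    Real.abs_le_sqrt (sq_le_mul_integral_hess2 hR hf x)
  calc ∫ x, gradSq f x ^ 2 ≤ 18 * √(4 * R ^ 2 * N) ^ 2 * N := integral_gradSq_sq_le hf hsup
    _ = 72 * R ^ 2 * N ^ 2 := by rw [Real.sq_sqrt (by positivity)]; ring

end SobolevBounds

section Stress

variable {Ω : Set (EuclideanSpace ℝ (Fin 2))} {v w φ : EuclideanSpace ℝ (Fin 2) → ℝ}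

/-- The `(0,0)` entry of the trace-free symmetric tensor `∇v ⊗ ∇w + ∇w ⊗ ∇v - (∇v · ∇w) I`; the
`(1,1)` entry is its negative. -/
def stressDiag (v w : EuclideanSpace ℝ (Fin 2) → ℝ) (x : EuclideanSpace ℝ (Fin 2)) : ℝ :=
  pd v 0 x * pd w 0 x - pd v 1 x * pd w 1 x

/-- The off-diagonal entry of the tensor `∇v ⊗ ∇w + ∇w ⊗ ∇v - (∇v · ∇w) I`. -/
def stressOff (v w : EuclideanSpace ℝ (Fin 2) → ℝ) (x : EuclideanSpace ℝ (Fin 2)) : ℝ :=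
  pd v 0 x * pd w 1 x + pd v 1 x * pd w 0 x

protected lemma IsTest.stressDiag (hv : IsTest Ω v) (hw : IsTest Ω w) :
    IsTest Ω (stressDiag v w) :=
  ((hv.pd 0).mul (hw.pd 0)).sub ((hv.pd 1).mul (hw.pd 1))

protected lemma IsTest.stressOff (hv : IsTest Ω v) (hw : IsTest Ω w) : IsTest Ω (stressOff v w) :=
  ((hv.pd 0).mul (hw.pd 1)).add ((hv.pd 1).mul (hw.pd 0))

lemma stressDiag_sq_add_stressOff_sq (v w : EuclideanSpace ℝ (Fin 2) → ℝ)
    (x : EuclideanSpace ℝ (Fin 2)) :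
    stressDiag v w x ^ 2 + stressOff v w x ^ 2 = gradSq v x * gradSq w x := by
  simp only [stressDiag, stressOff, gradSq]
  ring

lemma pd_stressDiag (hv : IsTest Ω v) (hw : IsTest Ω w) (i : Fin 2) :
    pd (stressDiag v w) i = fun x => pd v 0 x * pd2 w i 0 x + pd w 0 x * pd2 v i 0 x
      - (pd v 1 x * pd2 w i 1 x + pd w 1 x * pd2 v i 1 x) := by
  have hvd (j : Fin 2) := (hv.pd j).differentiable
  have hwd (j : Fin 2) := (hw.pd j).differentiable
  unfold stressDiag
  rw [pd_sub ((hvd 0).fun_mul (hwd 0)) ((hvd 1).fun_mul (hwd 1)), pd_mul (hvd 0) (hwd 0),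
    pd_mul (hvd 1) (hwd 1)]
  simp only [pd_pd]

lemma pd_stressOff (hv : IsTest Ω v) (hw : IsTest Ω w) (i : Fin 2) :
    pd (stressOff v w) i = fun x => pd v 0 x * pd2 w i 1 x + pd w 1 x * pd2 v i 0 x
      + (pd v 1 x * pd2 w i 0 x + pd w 0 x * pd2 v i 1 x) := by
  have hvd (j : Fin 2) := (hv.pd j).differentiable
  have hwd (j : Fin 2) := (hw.pd j).differentiable
  unfold stressOff
  rw [pd_add ((hvd 0).fun_mul (hwd 1)) ((hvd 1).fun_mul (hwd 0)), pd_mul (hvd 0) (hwd 1),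
    pd_mul (hvd 1) (hwd 0)]
  simp only [pd_pd]

lemma pd_stressDiag_add_pd_stressOff (hv : IsTest Ω v) (hw : IsTest Ω w)
    (x : EuclideanSpace ℝ (Fin 2)) :
    pd (stressDiag v w) 0 x + pd (stressOff v w) 1 x
      = lap v x * pd w 0 x + lap w x * pd v 0 x := by
  rw [pd_stressDiag hv hw, pd_stressOff hv hw, lap, lap, pd2_comm hv.contDiff_two 1 0,
    pd2_comm hw.contDiff_two 1 0]
  ring

lemma pd_stressOff_sub_pd_stressDiag (hv : IsTest Ω v) (hw : IsTest Ω w)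
    (x : EuclideanSpace ℝ (Fin 2)) :
    pd (stressOff v w) 0 x - pd (stressDiag v w) 1 x
      = lap v x * pd w 1 x + lap w x * pd v 1 x := by
  rw [pd_stressDiag hv hw, pd_stressOff hv hw, lap, lap, pd2_comm hv.contDiff_two 1 0,
    pd2_comm hw.contDiff_two 1 0]
  ring

lemma isTest_Gam_integrand (hv : IsTest Ω v) (hw : IsTest Ω w) (hφ : IsTest Ω φ) :
    IsTest Ω fun x => lap v x * (pd w 1 x * pd φ 0 x - pd w 0 x * pd φ 1 x) :=
  hv.lap.mul (((hw.pd 1).mul (hφ.pd 0)).sub ((hw.pd 0).mul (hφ.pd 1)))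

lemma isTest_stress_contraction (hv : IsTest Ω v) (hw : IsTest Ω w) (hφ : IsTest Ω φ) :
    IsTest Ω fun x => 2 * (stressDiag v w x * pd2 φ 0 1 x)
      - stressOff v w x * (pd2 φ 0 0 x - pd2 φ 1 1 x) :=
  (((hv.stressDiag hw).mul (hφ.pd2 0 1)).const_mul 2).sub
    ((hv.stressOff hw).mul ((hφ.pd2 0 0).sub (hφ.pd2 1 1)))

lemma Gam_eq_integral (hv : IsTest Ω v) (hw : IsTest Ω w) (hφ : IsTest Ω φ) :
    Gam Ω v w φ = ∫ x, lap v x * (pd w 1 x * pd φ 0 x - pd w 0 x * pd φ 1 x) :=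
  (isTest_Gam_integrand hv hw hφ).setIntegral_eq_integral

lemma Gam_add_Gam_swap (hv : IsTest Ω v) (hw : IsTest Ω w) (hφ : IsTest Ω φ) :
    Gam Ω v w φ + Gam Ω w v φ = ∫ x, (2 * (stressDiag v w x * pd2 φ 0 1 x)
      - stressOff v w x * (pd2 φ 0 0 x - pd2 φ 1 1 x)) := by
  have hD := hv.stressDiag hw
  have hO := hv.stressOff hw
  have hφ₀ := hφ.pd 0
  have hφ₁ := hφ.pd 1
  have hX : IsTest Ω fun x => stressOff v w x * pd φ 0 x - stressDiag v w x * pd φ 1 x :=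
    (hO.mul hφ₀).sub (hD.mul hφ₁)
  have hY : IsTest Ω fun x => stressDiag v w x * pd φ 0 x + stressOff v w x * pd φ 1 x :=
    (hD.mul hφ₀).add (hO.mul hφ₁)
  have divergence (x : EuclideanSpace ℝ (Fin 2)) :
      lap v x * (pd w 1 x * pd φ 0 x - pd w 0 x * pd φ 1 x)
        + lap w x * (pd v 1 x * pd φ 0 x - pd v 0 x * pd φ 1 x)
      = 2 * (stressDiag v w x * pd2 φ 0 1 x) - stressOff v w x * (pd2 φ 0 0 x - pd2 φ 1 1 x)
        + (pd (fun y => stressOff v w y * pd φ 0 y - stressDiag v w y * pd φ 1 y) 0 x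
          - pd (fun y => stressDiag v w y * pd φ 0 y + stressOff v w y * pd φ 1 y) 1 x) := by
    rw [pd_sub (hO.mul hφ₀).differentiable (hD.mul hφ₁).differentiable,
      pd_add (hD.mul hφ₀).differentiable (hO.mul hφ₁).differentiable,
      pd_mul hO.differentiable hφ₀.differentiable, pd_mul hD.differentiable hφ₁.differentiable,
      pd_mul hD.differentiable hφ₀.differentiable, pd_mul hO.differentiable hφ₁.differentiable]
    simp only [pd_pd, pd2_comm hφ.contDiff_two 1 0]
    linear_combination (-pd φ 0 x) * pd_stressOff_sub_pd_stressDiag hv hw x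
      + pd φ 1 x * pd_stressDiag_add_pd_stressOff hv hw x
  rw [Gam_eq_integral hv hw hφ, Gam_eq_integral hw hv hφ,
    ← integral_add (isTest_Gam_integrand hv hw hφ).integrable
      (isTest_Gam_integrand hw hv hφ).integrable]
  simp_rw [divergence]
  rw [integral_add (isTest_stress_contraction hv hw hφ).integrable
      ((hX.pd 0).sub (hY.pd 1)).integrable,
    integral_sub (hX.pd 0).integrable (hY.pd 1).integrable, integral_pd_eq_zero hX,
    integral_pd_eq_zero hY, sub_zero, add_zero]

lemma two_mul_Gam_self_sub_Gam_self (hv : IsTest Ω v) (hw : IsTest Ω w) (hφ : IsTest Ω φ) :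
    2 * (Gam Ω v v φ - Gam Ω w w φ) = Gam Ω (fun x => v x - w x) (fun x => v x + w x) φ
      + Gam Ω (fun x => v x + w x) (fun x => v x - w x) φ := by
  have hz := hv.sub hw
  have hs := hv.add hw
  rw [Gam_eq_integral hv hv hφ, Gam_eq_integral hw hw hφ, Gam_eq_integral hz hs hφ,
    Gam_eq_integral hs hz hφ,
    ← integral_sub (isTest_Gam_integrand hv hv hφ).integrable
      (isTest_Gam_integrand hw hw hφ).integrable,
    ← integral_add (isTest_Gam_integrand hz hs hφ).integrable
      (isTest_Gam_integrand hs hz hφ).integrable, ← integral_const_mul]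
  congr with x
  simp only [lap_sub hv.contDiff_two hw.contDiff_two, lap_add hv.contDiff_two hw.contDiff_two,
    pd_sub hv.differentiable hw.differentiable, pd_add hv.differentiable hw.differentiable]
  ring

lemma stress_contraction_sq_le (v w : EuclideanSpace ℝ (Fin 2) → ℝ) (hφ : ContDiff ℝ 2 φ)
    (x : EuclideanSpace ℝ (Fin 2)) :
    (2 * (stressDiag v w x * pd2 φ 0 1 x)
      - stressOff v w x * (pd2 φ 0 0 x - pd2 φ 1 1 x)) ^ 2
      ≤ gradSq v x * gradSq w x * (2 * hess2 φ x) := by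
  rw [← stressDiag_sq_add_stressOff_sq, hess2_eq, pd2_comm hφ 1 0]
  set D := stressDiag v w x
  set O := stressOff v w x
  set p := 2 * pd2 φ 0 1 x
  set q := pd2 φ 0 0 x - pd2 φ 1 1 x
  calc (2 * (D * pd2 φ 0 1 x) - O * q) ^ 2
      = (D ^ 2 + O ^ 2) * (p ^ 2 + q ^ 2) - (D * q + O * p) ^ 2 := by ring
    _ ≤ (D ^ 2 + O ^ 2) * (p ^ 2 + q ^ 2) := sub_le_self _ (sq_nonneg _)
    _ ≤ _ := by
        refine mul_le_mul_of_nonneg_left ?_ (by positivity)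
        linarith [sq_nonneg (pd2 φ 0 0 x + pd2 φ 1 1 x)]

end Stress

section Compactness

variable {Ω : Set (EuclideanSpace ℝ (Fin 2))} {v w φ : EuclideanSpace ℝ (Fin 2) → ℝ}

lemma Gam_add_Gam_swap_pow_four_le (hv : IsTest Ω v) (hw : IsTest Ω w) (hφ : IsTest Ω φ) :
    (Gam Ω v w φ + Gam Ω w v φ) ^ 4
      ≤ 4 * (∫ x, gradSq v x ^ 2) * (∫ x, gradSq w x ^ 2) * (∫ x, hess2 φ x) ^ 2 := by
  have hgrad : (∫ x, gradSq v x * gradSq w x) ^ 2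
      ≤ (∫ x, gradSq v x ^ 2) * ∫ x, gradSq w x ^ 2 :=
    sq_integral_le_integral_mul_integral_of_sq_le_mul (hv.gradSq.mul hw.gradSq).integrable
      (hv.gradSq.pow two_ne_zero).integrable (hw.gradSq.pow two_ne_zero).integrable
      (fun _ => sq_nonneg _) (fun _ => sq_nonneg _) fun x => (mul_pow _ _ 2).le
  have hcontraction : (Gam Ω v w φ + Gam Ω w v φ) ^ 2
      ≤ (∫ x, gradSq v x * gradSq w x) * (2 * ∫ x, hess2 φ x) := by
    rw [Gam_add_Gam_swap hv hw hφ, ← integral_const_mul]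
    exact sq_integral_le_integral_mul_integral_of_sq_le_mul
      (isTest_stress_contraction hv hw hφ).integrable (hv.gradSq.mul hw.gradSq).integrable
      (hφ.hess2.const_mul 2).integrable
      (fun x => mul_nonneg (gradSq_nonneg v x) (gradSq_nonneg w x))
      (fun x => by rw [hess2_eq]; positivity) (stress_contraction_sq_le v w hφ.contDiff_two)
  calc (Gam Ω v w φ + Gam Ω w v φ) ^ 4 = ((Gam Ω v w φ + Gam Ω w v φ) ^ 2) ^ 2 := by ring
    _ ≤ ((∫ x, gradSq v x * gradSq w x) * (2 * ∫ x, hess2 φ x)) ^ 2 := by gcongr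
    _ = (∫ x, gradSq v x * gradSq w x) ^ 2 * (4 * (∫ x, hess2 φ x) ^ 2) := by ring
    _ ≤ (∫ x, gradSq v x ^ 2) * (∫ x, gradSq w x ^ 2) * (4 * (∫ x, hess2 φ x) ^ 2) := by gcongr
    _ = _ := by ring

lemma Gam_self_sub_Gam_self_pow_four_le {R A C : ℝ} (hR : 0 ≤ R) (hΩ : Ω ⊆ Metric.ball 0 R)
    (hv : IsTest Ω v) (hw : IsTest Ω w) (hφ : IsTest Ω φ) (hvC : ∫ x, hess2 v x ≤ C ^ 2)
    (hwC : ∫ x, hess2 w x ≤ C ^ 2) (hφ1 : ∫ x, hess2 φ x ≤ 1) (hA : ∀ x, |v x - w x| ≤ A) :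
    (Gam Ω v v φ - Gam Ω w w φ) ^ 4 ≤ 20736 * R ^ 2 * C ^ 6 * A ^ 2 := by
  have hz := hv.sub hw
  have hs := hv.add hw
  have parallelogram := integral_hess2_sub_add_integral_hess2_add hv hw
  have hz_nonneg := integral_hess2_nonneg fun x => v x - w x
  have hs_nonneg := integral_hess2_nonneg fun x => v x + w x
  have hzC : ∫ x, hess2 (fun y => v y - w y) x ≤ 4 * C ^ 2 := by linarith
  have hsC : ∫ x, hess2 (fun y => v y + w y) x ≤ 4 * C ^ 2 := by linarith
  have hz4 : ∫ x, gradSq (fun y => v y - w y) x ^ 2 ≤ 18 * A ^ 2 * (4 * C ^ 2) :=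
    (integral_gradSq_sq_le hz hA).trans (by gcongr)
  have hs4 : ∫ x, gradSq (fun y => v y + w y) x ^ 2 ≤ 72 * R ^ 2 * (4 * C ^ 2) ^ 2 :=
    (integral_gradSq_sq_le_of_ball hR (hs.mono hΩ)).trans (by gcongr)
  have hφ_nonneg := integral_hess2_nonneg φ
  have hquartic := Gam_add_Gam_swap_pow_four_le hz hs hφ
  rw [← two_mul_Gam_self_sub_Gam_self hv hw hφ, mul_pow] at hquartic
  have : 2 ^ 4 * (Gam Ω v v φ - Gam Ω w w φ) ^ 4
      ≤ 4 * (18 * A ^ 2 * (4 * C ^ 2)) * (72 * R ^ 2 * (4 * C ^ 2) ^ 2) * 1 ^ 2 :=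
    hquartic.trans (by gcongr)
  linarith

lemma dualNorm_pow_four_le {l : (EuclideanSpace ℝ (Fin 2) → ℝ) → ℝ} {c : ℝ} (hc : 0 ≤ c)
    (hl : ∀ φ, IsTest Ω φ → ∫ x, hess2 φ x ≤ 1 → l φ ^ 4 ≤ c) : dualNorm Ω l ^ 4 ≤ c := by
  have hc4 : √√c ^ 4 = c := by
    rw [show 4 = 2 * 2 from rfl, pow_mul, Real.sq_sqrt (Real.sqrt_nonneg c), Real.sq_sqrt hc]
  have hnorm : dualNorm Ω l ≤ √√c := by
    refine Real.sSup_le ?_ (Real.sqrt_nonneg _)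
    rintro _ ⟨φ, hφ, hφ1, rfl⟩
    refine le_of_pow_le_pow_left₀ four_ne_zero (Real.sqrt_nonneg _) ?_
    rw [hc4, Even.pow_abs ⟨2, rfl⟩]
    exact hl φ hφ (by simpa using integral_hess2_le_sq hφ hφ1)
  have hnonneg : 0 ≤ dualNorm Ω l := by
    refine Real.sSup_nonneg ?_
    rintro _ ⟨φ, -, -, rfl⟩
    exact abs_nonneg _
  calc dualNorm Ω l ^ 4 ≤ √√c ^ 4 := by gcongr
    _ = c := hc4

lemma exists_strictMono_forall_abs_sub_le {R C : ℝ} (hR : 0 ≤ R)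
    {v : ℕ → EuclideanSpace ℝ (Fin 2) → ℝ} (hv : ∀ n, IsTest (Metric.ball 0 R) (v n))
    (hC : ∀ n, ∫ x, hess2 (v n) x ≤ C ^ 2) :
    ∃ k : ℕ → ℕ, StrictMono k ∧ ∀ A : ℝ, 0 < A → ∃ M : ℕ, ∀ m ≥ M, ∀ n ≥ M,
      ∀ x, |v (k m) x - v (k n) x| ≤ A := by
  have hsup (n : ℕ) (x : EuclideanSpace ℝ (Fin 2)) : |v n x| ≤ √(4 * R ^ 2 * C ^ 2) :=
    Real.abs_le_sqrt <| (sq_le_mul_integral_hess2 hR (hv n) x).trans <|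
      mul_le_mul_of_nonneg_left (hC n) (by positivity)
  have hequi : Equicontinuous v := by
    refine Metric.equicontinuous_of_continuity_modulus (fun t => √(4 * R * t * C ^ 2)) ?_ v ?_
    · have : Continuous fun t : ℝ => √(4 * R * t * C ^ 2) := by fun_prop
      simpa using this.tendsto 0
    · intro x y n
      rw [Real.dist_eq, dist_eq_norm]
      exact Real.abs_le_sqrt <| (sq_sub_le_mul_integral_hess2 hR (hv n) x y).trans <|
        mul_le_mul_of_nonneg_left (hC n) (by positivity)
  obtain ⟨k, hk, hcauchy⟩ := exists_strictMono_uniformCauchySeqOn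
    (isCompact_closedBall (0 : EuclideanSpace ℝ (Fin 2)) R) isCompact_Icc
    (fun n x _ => abs_le.mp (hsup n x)) (hequi.equicontinuousOn _)
  refine ⟨k, hk, fun A hA => ?_⟩
  obtain ⟨M, hM⟩ := Metric.uniformCauchySeqOn_iff.mp hcauchy A hA
  refine ⟨M, fun m hm n hn x => ?_⟩
  by_cases hx : x ∈ Metric.ball 0 R
  · exact (hM m hm n hn x (Metric.ball_subset_closedBall hx)).le
  · have hzero (j : ℕ) : v j x = 0 :=
      image_eq_zero_of_notMem_tsupport fun hmem => hx ((hv j).2.2 hmem)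
    simpa [hzero] using hA.le

end Compactness

theorem G_compact_general (Ω : Set (EuclideanSpace ℝ (Fin 2))) (hbdd : Bornology.IsBounded Ω)
    (v : ℕ → EuclideanSpace ℝ (Fin 2) → ℝ) (hv : ∀ n, IsTest Ω (v n))
    (C : ℝ) (hC : ∀ n, Real.sqrt (∫ x in Ω, hess2 (v n) x) ≤ C) :
    ∃ k : ℕ → ℕ, StrictMono k ∧ ∀ ε : ℝ, 0 < ε → ∃ M : ℕ, ∀ m ≥ M, ∀ n ≥ M,
      dualNorm Ω (fun φ => Gam Ω (v (k m)) (v (k m)) φ - Gam Ω (v (k n)) (v (k n)) φ) < ε := by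
  obtain ⟨R, hR, hΩR⟩ := hbdd.subset_ball_lt 0 0
  have hbound (n : ℕ) : ∫ x, hess2 (v n) x ≤ C ^ 2 := integral_hess2_le_sq (hv n) (hC n)
  obtain ⟨k, hk, hcauchy⟩ :=
    exists_strictMono_forall_abs_sub_le hR.le (fun n => (hv n).mono hΩR) hbound
  refine ⟨k, hk, fun ε hε => ?_⟩
  obtain ⟨c, hc, hcε⟩ := exists_pos_mul_lt (pow_pos hε 4) (20736 * R ^ 2 * C ^ 6)
  obtain ⟨M, hM⟩ := hcauchy (√c) (Real.sqrt_pos.mpr hc)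
  refine ⟨M, fun m hm n hn => lt_of_pow_lt_pow_left₀ 4 hε.le (lt_of_le_of_lt ?_ hcε)⟩
  refine dualNorm_pow_four_le (mul_nonneg (by positivity) hc.le) fun φ hφ hφ1 => ?_
  simpa only [Real.sq_sqrt hc.le] using Gam_self_sub_Gam_self_pow_four_le hR.le hΩR (hv (k m))
    (hv (k n)) hφ (hbound (k m)) (hbound (k n)) hφ1 (hM m hm n hn)

/-- Compactness of the quadratic map `G(v) = Γ(v,v) : V → V*`: every `H²`-bounded sequence
admits a subsequence whose image under `G` is Cauchy in the dual norm, i.e. `G` maps bounded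
sets to relatively compact subsets of `V*`. -/
theorem G_compact (Ω : Set (EuclideanSpace ℝ (Fin 2))) (hΩ : IsOpen Ω)
    (hbdd : Bornology.IsBounded Ω)
    (v : ℕ → EuclideanSpace ℝ (Fin 2) → ℝ) (hv : ∀ n, IsTest Ω (v n))
    (C : ℝ) (hC : ∀ n, Real.sqrt (∫ x in Ω, hess2 (v n) x) ≤ C) :
    ∃ k : ℕ → ℕ, StrictMono k ∧ ∀ ε : ℝ, 0 < ε → ∃ M : ℕ, ∀ m ≥ M, ∀ n ≥ M,
      dualNorm Ω (fun φ => Gam Ω (v (k m)) (v (k m)) φ - Gam Ω (v (k n)) (v (k n)) φ) < ε :=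
  G_compact_general Ω hbdd v hv C hC

end
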